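/- arXiv:1602.04758 — 2 statements merged into one kernel-verified Lean document; each statement's English description precedes it below -/
import Mathlib

section
/- Let Ω ⊆ ℝ^d be a bounded open convex set and f : Ω → [0,∞) continuous. If u : Ω → ℝ is upper semicontinuous and is a viscosity subsolution of the Bellman equation H(D²u, f) = 0 (i.e. for every φ ∈ C²(Ω) such that u − φ attains a local maximum at x ∈ Ω one has H(D²φ(x), f(x)) ≤ 0), then u is convex on Ω. -/
open Matrix Set

/-- The set 𝐒₁ of positive semidefinite symmetric d×d real matrices with unit trace. -/
def S1set (d : ℕ) : Set (Matrix (Fin d) (Fin d) ℝ) :=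
  {B | B.PosSemidef ∧ B.trace = 1}

/-- The value −B:A + f·(det B)^(1/d) appearing under the supremum of the Bellman operator. -/
noncomputable def bval (d : ℕ) (A B : Matrix (Fin d) (Fin d) ℝ) (f : ℝ) : ℝ :=
  -((B * A).trace) + f * B.det ^ ((1 : ℝ) / d)

/-- The Bellman operator H(A,f) = sup_{B ∈ 𝐒₁} (−B:A + f·(det B)^(1/d)). -/
noncomputable def bellman (d : ℕ) (A : Matrix (Fin d) (Fin d) ℝ) (f : ℝ) : ℝ :=
  sSup ((fun B => bval d A B f) '' S1set d)

/-- The Monge–Ampère operator M(A,f) = (f/d)^d − det A. -/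
noncomputable def MAop (d : ℕ) (A : Matrix (Fin d) (Fin d) ℝ) (f : ℝ) : ℝ :=
  (f / d) ^ d - A.det

/-- The Hessian matrix D²φ(x) of φ : ℝ^d → ℝ at x. -/
noncomputable def hessianM (d : ℕ) (φ : (Fin d → ℝ) → ℝ) (x : Fin d → ℝ) :
    Matrix (Fin d) (Fin d) ℝ :=
  fun i j => iteratedFDeriv ℝ 2 φ x ![Pi.single i 1, Pi.single j 1]

/-!
If `u` exceeds a chord over a segment `[x, y]` at some point by `δ > 0`, subtract from `u` the chord
plus the concave parabola `δ s (1 - s)` in the coordinate `s` along the segment. The difference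
vanishes at `x` and `y` but is positive at that point. Adding to the subtracted function a large
multiple of a smooth penalty vanishing exactly on the line through `x` and `y` localizes the maximum
in the interior of a thin tube, so `u` is touched from above there by a smooth function whose second
derivative along `y - x` is `-2δ < 0`. On the other hand, testing the Bellman supremum with the
rank-one matrices `v vᵀ / |v|²`, whose determinant vanishes when `d ≥ 2`, shows that
`H(D²φ(x), f(x)) ≤ 0` forces `D²φ(x)` to be positive semidefinite.
-/

section BellmanOperator

lemma abs_apply_le_trace_of_posSemidef {n : Type*} [Fintype n] {B : Matrix n n ℝ}
    (hB : B.PosSemidef) (i j : n) : |B i j| ≤ B.trace := by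
  classical
  have diag_le_trace (k : n) : B k k ≤ B.trace :=
    Finset.single_le_sum (f := fun k => B k k) (fun _ _ => hB.diag_nonneg) (Finset.mem_univ k)
  have symm : B j i = B i j := by simpa using hB.1.apply i j
  have nonneg_add : 0 ≤ B i i + B j i + (B i j + B j j) := by
    have := hB.dotProduct_mulVec_nonneg (Pi.single i 1 + Pi.single j 1)
    simpa [mulVec_add, add_dotProduct, add_add_add_comm] using this
  have nonneg_sub : 0 ≤ B i i - B j i - (B i j - B j j) := by
    have := hB.dotProduct_mulVec_nonneg (Pi.single i 1 - Pi.single j 1)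
    simpa [mulVec_sub, sub_dotProduct] using this
  have := diag_le_trace i
  have := diag_le_trace j
  exact abs_le.2 ⟨by linarith, by linarith⟩

lemma trace_vecMulVec_mul {n R : Type*} [Fintype n] [CommSemiring R] (v w : n → R)
    (A : Matrix n n R) : (vecMulVec v w * A).trace = w ⬝ᵥ A *ᵥ v := by
  rw [vecMulVec_mul, trace_vecMulVec, dotProduct_comm, ← dotProduct_mulVec]

variable {d : ℕ}

lemma S1set_subset_pi_Icc :
    S1set d ⊆ univ.pi fun _ => univ.pi fun _ => Icc (-1) 1 :=
  fun _ ⟨hpos, htrace⟩ i _ j _ =>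
    abs_le.1 (htrace ▸ abs_apply_le_trace_of_posSemidef hpos i j)

lemma continuous_bval (A : Matrix (Fin d) (Fin d) ℝ) (f : ℝ) :
    Continuous fun B => bval d A B f := by
  have hdet : Continuous fun B : Matrix (Fin d) (Fin d) ℝ => B.det ^ ((1 : ℝ) / d) :=
    continuous_id.matrix_det.rpow_const fun _ => Or.inr (by positivity)
  have htrace : Continuous fun B : Matrix (Fin d) (Fin d) ℝ => (B * A).trace :=
    (continuous_id.matrix_mul continuous_const).matrix_trace
  exact htrace.neg.add (continuous_const.mul hdet)

lemma bval_le_bellman (A : Matrix (Fin d) (Fin d) ℝ) (f : ℝ) {B : Matrix (Fin d) (Fin d) ℝ}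
    (hB : B ∈ S1set d) : bval d A B f ≤ bellman d A f := by
  have hcompact : IsCompact (univ.pi fun _ : Fin d => univ.pi fun _ : Fin d => Icc (-1 : ℝ) 1) :=
    isCompact_univ_pi fun _ => isCompact_univ_pi fun _ => isCompact_Icc
  have hbdd : BddAbove ((fun B => bval d A B f) '' S1set d) :=
    (hcompact.bddAbove_image (continuous_bval A f).continuousOn).mono
      (image_mono S1set_subset_pi_Icc)
  exact le_csSup hbdd (mem_image_of_mem _ hB)

lemma inv_dotProduct_self_smul_vecMulVec_mem_S1set {v : Fin d → ℝ} (hv : v ≠ 0) :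
    (v ⬝ᵥ v)⁻¹ • vecMulVec v v ∈ S1set d := by
  have hvv : 0 < v ⬝ᵥ v := by simpa using dotProduct_star_self_pos_iff.2 hv
  refine ⟨?_, by simp [trace_smul, trace_vecMulVec, hvv.ne']⟩
  simpa using (posSemidef_vecMulVec_self_star v).smul (inv_nonneg.2 hvv.le)

lemma bval_inv_dotProduct_self_smul_vecMulVec (hd : 2 ≤ d) (A : Matrix (Fin d) (Fin d) ℝ)
    (f : ℝ) (v : Fin d → ℝ) :
    bval d A ((v ⬝ᵥ v)⁻¹ • vecMulVec v v) f = -((v ⬝ᵥ v)⁻¹ * (v ⬝ᵥ A *ᵥ v)) := by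
  have : Nontrivial (Fin d) := Fin.nontrivial_iff_two_le.2 hd
  have hdet : ((v ⬝ᵥ v)⁻¹ • vecMulVec v v).det = 0 := by rw [← smul_vecMulVec, det_vecMulVec]
  have hexp : (1 : ℝ) / d ≠ 0 := by positivity
  rw [bval, hdet, Real.zero_rpow hexp, smul_mul_assoc, trace_smul, trace_vecMulVec_mul,
    smul_eq_mul, mul_zero, add_zero]

theorem dotProduct_mulVec_nonneg_of_bellman_nonpos (hd : 2 ≤ d) {A : Matrix (Fin d) (Fin d) ℝ}
    {f : ℝ} (h : bellman d A f ≤ 0) (v : Fin d → ℝ) : 0 ≤ v ⬝ᵥ A *ᵥ v := by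
  rcases eq_or_ne v 0 with rfl | hv
  · simp
  have hvv : 0 < v ⬝ᵥ v := by simpa using dotProduct_star_self_pos_iff.2 hv
  have hval := (bval_le_bellman A f (inv_dotProduct_self_smul_vecMulVec_mem_S1set hv)).trans h
  rw [bval_inv_dotProduct_self_smul_vecMulVec hd, neg_nonpos] at hval
  exact (mul_nonneg_iff_of_pos_left (inv_pos.2 hvv)).1 hval

end BellmanOperator

section SecondDerivative

lemma dotProduct_hessianM_mulVec (d : ℕ) (φ : (Fin d → ℝ) → ℝ) (x v : Fin d → ℝ) :
    v ⬝ᵥ hessianM d φ x *ᵥ v = iteratedFDeriv ℝ 2 φ x fun _ => v := by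
  have hmatrix : hessianM d φ x =
      LinearMap.toMatrix₂' ℝ (fderiv ℝ (fderiv ℝ φ) x).toBilinForm := by
    ext i j
    simp [hessianM, iteratedFDeriv_two_apply, LinearMap.toMatrix₂'_apply]
  rw [hmatrix, ← toLinearMap₂'_apply', toLinearMap₂'_toMatrix', iteratedFDeriv_two_apply]
  rfl

variable {E F : Type*} [NormedAddCommGroup E] [NormedSpace ℝ E]
  [NormedAddCommGroup F] [NormedSpace ℝ F]

lemma iteratedDeriv_comp_add_smul {φ : E → F} {n : ℕ} (hφ : ContDiff ℝ n φ) (x v : E) (t : ℝ) :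
    iteratedDeriv n (fun τ : ℝ => φ (x + τ • v)) t =
      iteratedFDeriv ℝ n φ (x + t • v) fun _ => v := by
  have hshift : ContDiff ℝ n fun w => φ (x + w) := by fun_prop
  have hcomp := (ContinuousLinearMap.toSpanSingleton ℝ v).iteratedFDeriv_comp_right hshift t
    (i := n) le_rfl
  rw [iteratedFDeriv_comp_add_left] at hcomp
  simpa [iteratedDeriv_eq_iteratedFDeriv, Function.comp_def] using
    DFunLike.congr_fun hcomp fun _ => 1

lemma iteratedFDeriv_two_eq_of_forall_add_smul {φ : E → ℝ} (hφ : ContDiff ℝ 2 φ) {x v : E}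
    {a b c : ℝ} (h : ∀ τ : ℝ, φ (x + τ • v) = a + b * τ + c * τ ^ 2) :
    iteratedFDeriv ℝ 2 φ x (fun _ => v) = 2 * c := by
  have hderiv (τ : ℝ) : HasDerivAt (fun τ => a + b * τ + c * τ ^ 2) (b + c * (2 * τ)) τ := by
    simpa using (((hasDerivAt_id τ).const_mul b).const_add a).fun_add
      ((hasDerivAt_pow 2 τ).const_mul c)
  have hderiv₂ : HasDerivAt (fun τ => b + c * (2 * τ)) (c * 2) 0 := by
    simpa using (((hasDerivAt_id (0 : ℝ)).const_mul 2).const_mul c).const_add b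
  have hline := iteratedDeriv_comp_add_smul (n := 2) hφ x v 0
  rw [zero_smul, add_zero] at hline
  rw [← hline, funext h, iteratedDeriv_succ, iteratedDeriv_one, funext fun τ => (hderiv τ).deriv,
    hderiv₂.deriv, mul_comm]

end SecondDerivative

section Penalization

variable {X : Type*} [TopologicalSpace X] {K : Set X} {g q : X → ℝ}

lemma upperSemicontinuousOn_sub (hg : UpperSemicontinuousOn g K) (hq : ContinuousOn q K) :
    UpperSemicontinuousOn (fun w => g w - q w) K := by
  simpa only [sub_eq_add_neg] using hg.add hq.fun_neg.upperSemicontinuousOn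

lemma exists_forall_sub_mul_lt (hK : IsCompact K) (hg : UpperSemicontinuousOn g K)
    (hq : ContinuousOn q K) (hq_nonneg : ∀ w, 0 ≤ q w) {c : ℝ}
    (hlt : ∀ w ∈ K, q w = 0 → g w < c) : ∃ N : ℝ, ∀ w ∈ K, g w - N * q w < c := by
  refine hK.induction_on (p := fun s => ∃ N : ℝ, ∀ w ∈ s, g w - N * q w < c) ⟨0, by simp⟩ ?_ ?_ ?_
  · rintro s t hst ⟨N, hN⟩
    exact ⟨N, fun w hw => hN w (hst hw)⟩
  · rintro s t ⟨N, hN⟩ ⟨M, hM⟩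
    refine ⟨max N M, fun w hw => ?_⟩
    have hleft := mul_le_mul_of_nonneg_right (le_max_left N M) (hq_nonneg w)
    have hright := mul_le_mul_of_nonneg_right (le_max_right N M) (hq_nonneg w)
    rcases hw with hw | hw
    · linarith [hN w hw]
    · linarith [hM w hw]
  · intro w hw
    obtain ⟨N, hN⟩ : ∃ N : ℝ, g w - N * q w < c := by
      rcases (hq_nonneg w).eq_or_lt' with hzero | hpos
      · exact ⟨0, by simpa using hlt w hw hzero⟩
      · obtain ⟨N, hN⟩ := exists_gt ((g w - c) / q w)
        exact ⟨N, by linarith [(div_lt_iff₀ hpos).1 hN]⟩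
    exact ⟨_, upperSemicontinuousOn_sub hg (continuousOn_const.mul hq) w hw c hN, N, fun _ => id⟩

lemma exists_isLocalMax_sub_mul_of_frontier (hK : IsCompact K) (hKclosed : IsClosed K)
    (hg : UpperSemicontinuousOn g K) (hq : ContinuousOn q K) (hq_nonneg : ∀ w, 0 ≤ q w) {z : X}
    (hz : z ∈ K) (hqz : q z = 0) (hfrontier : ∀ w ∈ frontier K, q w = 0 → g w < g z) :
    ∃ N : ℝ, ∃ w ∈ K, IsLocalMax (fun w => g w - N * q w) w := by
  have hsub : frontier K ⊆ K := hKclosed.frontier_subset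
  obtain ⟨N, hN⟩ := exists_forall_sub_mul_lt (hK.of_isClosed_subset isClosed_frontier hsub)
    (hg.mono hsub) (hq.mono hsub) hq_nonneg hfrontier
  obtain ⟨w, hw, hmax⟩ :=
    (upperSemicontinuousOn_sub hg (continuousOn_const.mul hq)).exists_isMaxOn ⟨z, hz⟩ hK
  have hle : g z ≤ g w - N * q w := by simpa [hqz] using hmax hz
  have hinterior : w ∈ interior K := by
    by_contra hnot
    exact (hN w (hKclosed.frontier_eq ▸ ⟨hw, hnot⟩)).not_ge hle
  exact ⟨N, w, hw, hmax.isLocalMax (mem_interior_iff_mem_nhds.1 hinterior)⟩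

end Penalization

section Line

variable {E : Type*} [NormedAddCommGroup E] [NormedSpace ℝ E] {x y : E}

lemma strongDual_lineMap_sub {S : StrongDual ℝ E} (hS : S (y - x) = 1) (t : ℝ) :
    S (AffineMap.lineMap x y t - x) = t := by
  simp [AffineMap.lineMap_apply, hS]

lemma strongDual_add_smul_sub {S : StrongDual ℝ E} (hS : S (y - x) = 1) (w : E) (τ : ℝ) :
    S (w + τ • (y - x) - x) = S (w - x) + τ := by
  rw [add_sub_right_comm, map_add, map_smul, hS, smul_eq_mul, mul_one]

lemma exists_isCompact_frontier_inter_line_subset [LocallyCompactSpace E] {Ω : Set E}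
    (hΩ : IsOpen Ω) (hseg : segment ℝ x y ⊆ Ω) {S : StrongDual ℝ E} (hS : S (y - x) = 1) :
    ∃ K ⊆ Ω, IsCompact K ∧ segment ℝ x y ⊆ K ∧
      ∀ w ∈ frontier K, w = AffineMap.lineMap x y (S (w - x)) → w = x ∨ w = y := by
  have hs : Continuous fun w => S (w - x) := by fun_prop
  have hcompact : IsCompact (segment ℝ x y) := by
    rw [segment_eq_image_lineMap]
    exact isCompact_Icc.image AffineMap.lineMap_continuous
  obtain ⟨L, hL, hsegL, hLΩ⟩ := exists_compact_between hcompact hΩ hseg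
  have hslab : IsClosed {w | S (w - x) ∈ Icc 0 1} := isClosed_Icc.preimage hs
  have hK : IsCompact (L ∩ {w | S (w - x) ∈ Icc 0 1}) := hL.inter_right hslab
  rw [segment_eq_image_lineMap, image_subset_iff] at hsegL
  refine ⟨L ∩ {w | S (w - x) ∈ Icc 0 1}, inter_subset_left.trans hLΩ, hK, ?_, ?_⟩
  · rw [segment_eq_image_lineMap, image_subset_iff]
    exact fun t ht => ⟨interior_subset (hsegL ht), by rwa [mem_ofPred, strongDual_lineMap_sub hS]⟩
  · intro w hw hline
    rw [hK.isClosed.frontier_eq, interior_inter] at hw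
    obtain ⟨⟨-, hIcc⟩, hnot⟩ := hw
    have hwL : w ∈ interior L := hline ▸ hsegL hIcc
    have hIoo : S (w - x) ∉ Ioo 0 1 := fun hmem =>
      hnot ⟨hwL, preimage_interior_subset_interior_preimage hs (by rwa [interior_Icc])⟩
    rcases eq_endpoints_or_mem_Ioo_of_mem_Icc hIcc with h | h | h
    · exact Or.inl (by simpa [h] using hline)
    · exact Or.inr (by simpa [h] using hline)
    · exact absurd h hIoo

variable [FiniteDimensional ℝ E] {S : StrongDual ℝ E} {w : E}

/-- The squared Euclidean distance from `w` to its projection onto the line through `x` and `y`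
along the hyperplanes on which the functional `S` is constant, meant for `S (y - x) = 1`. It serves
as a smooth penalty that vanishes exactly on the line; `toEuclidean` replaces the ambient norm,
whose square need not be differentiable. -/
noncomputable def lineDefect (S : StrongDual ℝ E) (x y w : E) : ℝ :=
  ‖toEuclidean (w - AffineMap.lineMap x y (S (w - x)))‖ ^ 2

lemma lineDefect_nonneg : 0 ≤ lineDefect S x y w := sq_nonneg _

lemma lineDefect_eq_zero_iff :
    lineDefect S x y w = 0 ↔ w = AffineMap.lineMap x y (S (w - x)) := by
  simp [lineDefect, sub_eq_zero]

lemma lineDefect_lineMap (hS : S (y - x) = 1) (t : ℝ) :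
    lineDefect S x y (AffineMap.lineMap x y t) = 0 := by
  rw [lineDefect_eq_zero_iff, strongDual_lineMap_sub hS]

lemma lineDefect_add_smul (hS : S (y - x) = 1) (τ : ℝ) :
    lineDefect S x y (w + τ • (y - x)) = lineDefect S x y w := by
  have hdiff : w + τ • (y - x) - AffineMap.lineMap x y (S (w - x) + τ) =
      w - AffineMap.lineMap x y (S (w - x)) := by
    simp only [AffineMap.lineMap_apply_module']
    module
  rw [lineDefect, lineDefect, strongDual_add_smul_sub hS, hdiff]

lemma contDiff_lineDefect {n : WithTop ℕ∞} : ContDiff ℝ n (lineDefect S x y) := by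
  unfold lineDefect
  simp only [AffineMap.lineMap_apply_module']
  exact (toEuclidean.contDiff.comp (by fun_prop)).norm_sq ℝ

end Line

section Convexity

variable {E : Type*} [NormedAddCommGroup E] [NormedSpace ℝ E] [FiniteDimensional ℝ E]
  {Ω : Set E} {u : E → ℝ} {x y : E}

/-- The chord with end values `a` and `b` over the segment from `x` to `y`, raised by the concave
parabola `δ s (1 - s)` and by `N` times the penalty `lineDefect`, where `s = S (w - x)` is the
coordinate along the segment. It is the test function that touches from above a function exceeding
its chord. -/
noncomputable def penalizedChord (S : StrongDual ℝ E) (x y : E) (a b δ N : ℝ) (w : E) : ℝ :=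
  a + (b - a) * S (w - x) + δ * (S (w - x) * (1 - S (w - x))) + N * lineDefect S x y w

lemma contDiff_penalizedChord {S : StrongDual ℝ E} {a b δ N : ℝ} {n : WithTop ℕ∞} :
    ContDiff ℝ n (penalizedChord S x y a b δ N) := by
  have := contDiff_lineDefect (S := S) (x := x) (y := y) (n := n)
  unfold penalizedChord
  fun_prop

lemma iteratedFDeriv_two_penalizedChord {S : StrongDual ℝ E} (hS : S (y - x) = 1)
    (a b δ N : ℝ) (w : E) :
    iteratedFDeriv ℝ 2 (penalizedChord S x y a b δ N) w (fun _ => y - x) = 2 * -δ := by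
  refine iteratedFDeriv_two_eq_of_forall_add_smul (a := penalizedChord S x y a b δ N w)
    (b := b - a + δ * (1 - 2 * S (w - x))) contDiff_penalizedChord fun τ => ?_
  rw [penalizedChord, penalizedChord, strongDual_add_smul_sub hS, lineDefect_add_smul hS]
  ring

lemma exists_isLocalMax_sub_penalizedChord (hΩ : IsOpen Ω) (hseg : segment ℝ x y ⊆ Ω)
    (hu : UpperSemicontinuousOn u Ω) {S : StrongDual ℝ E} (hS : S (y - x) = 1) {t δ : ℝ}
    (ht : t ∈ Icc 0 1)
    (hlt : u x + (u y - u x) * t + δ * (t * (1 - t)) < u (AffineMap.lineMap x y t)) :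
    ∃ N : ℝ, ∃ w ∈ Ω, IsLocalMax (fun w => u w - penalizedChord S x y (u x) (u y) δ N w) w := by
  obtain ⟨K, hKΩ, hK, hsegK, hfrontier⟩ := exists_isCompact_frontier_inter_line_subset hΩ hseg hS
  let g w := u w - penalizedChord S x y (u x) (u y) δ 0 w
  have hg : UpperSemicontinuousOn g K := upperSemicontinuousOn_sub (hu.mono hKΩ)
    (contDiff_penalizedChord (n := 0)).continuous.continuousOn
  have hz : AffineMap.lineMap x y t ∈ K :=
    hsegK (segment_eq_image_lineMap ℝ x y ▸ mem_image_of_mem _ ht)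
  have hgx : g x = 0 := by simp [g, penalizedChord]
  have hgy : g y = 0 := by simp [g, penalizedChord, hS, -map_sub]
  have hgz : 0 < g (AffineMap.lineMap x y t) := by
    simp only [g, penalizedChord, strongDual_lineMap_sub hS]
    linarith
  obtain ⟨N, w, hw, hmax⟩ := exists_isLocalMax_sub_mul_of_frontier hK hK.isClosed hg
    (contDiff_lineDefect (n := 0)).continuous.continuousOn (fun _ => lineDefect_nonneg)
    hz (lineDefect_lineMap hS t) fun w hw hzero => by
      rcases hfrontier w hw (lineDefect_eq_zero_iff.1 hzero) with rfl | rfl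
      · rwa [hgx]
      · rwa [hgy]
  refine ⟨N, w, hKΩ hw, ?_⟩
  convert hmax using 2
  simp only [g, penalizedChord]
  ring

theorem convexOn_of_isLocalMax_sub_imp_iteratedFDeriv_nonneg (hΩ : IsOpen Ω)
    (hconvex : Convex ℝ Ω) (hu : UpperSemicontinuousOn u Ω)
    (htouch : ∀ φ : E → ℝ, ContDiff ℝ 2 φ → ∀ x ∈ Ω, IsLocalMax (fun w => u w - φ w) x →
      ∀ v, 0 ≤ iteratedFDeriv ℝ 2 φ x fun _ => v) :
    ConvexOn ℝ Ω u := by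
  refine convexOn_iff_pairwise_pos.2 ⟨hconvex, fun x hx y hy hxy r t hr ht hrt => ?_⟩
  obtain rfl : r = 1 - t := by linarith
  by_contra! hlt
  rw [← AffineMap.lineMap_apply_module x y t, smul_eq_mul, smul_eq_mul] at hlt
  obtain ⟨S, hS⟩ := SeparatingDual.exists_eq_one (R := ℝ) (sub_ne_zero.2 hxy.symm)
  set δ := u (AffineMap.lineMap x y t) - ((1 - t) * u x + t * u y)
  have hδ : 0 < δ := sub_pos.2 hlt
  have hraised : u x + (u y - u x) * t + δ * (t * (1 - t)) < u (AffineMap.lineMap x y t) := by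
    have : δ * (t * (1 - t)) < δ * 1 := mul_lt_mul_of_pos_left (by nlinarith) hδ
    linarith
  obtain ⟨N, w, hw, hmax⟩ := exists_isLocalMax_sub_penalizedChord hΩ
    (hconvex.segment_subset hx hy) hu hS ⟨ht.le, by linarith⟩ hraised
  have hnonneg := htouch _ contDiff_penalizedChord w hw hmax (y - x)
  rw [iteratedFDeriv_two_penalizedChord hS] at hnonneg
  linarith

end Convexity

theorem stmt_9_general (d : ℕ) (hd : 2 ≤ d) (Ω : Set (Fin d → ℝ)) (hΩo : IsOpen Ω)
    (hΩc : Convex ℝ Ω) (f u : (Fin d → ℝ) → ℝ) (husc : UpperSemicontinuousOn u Ω)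
    (hsub : ∀ φ : (Fin d → ℝ) → ℝ, ContDiffOn ℝ 2 φ Ω →
      ∀ x ∈ Ω, IsLocalMaxOn (fun y => u y - φ y) Ω x →
        bellman d (hessianM d φ x) (f x) ≤ 0) :
    ConvexOn ℝ Ω u := by
  refine convexOn_of_isLocalMax_sub_imp_iteratedFDeriv_nonneg hΩo hΩc husc
    fun φ hφ x hx hmax v => ?_
  have hbellman := hsub φ hφ.contDiffOn x hx (hmax.on Ω)
  rw [← dotProduct_hessianM_mulVec]
  exact dotProduct_mulVec_nonneg_of_bellman_nonpos hd hbellman v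

/-- An upper semicontinuous viscosity subsolution of the Bellman equation on a bounded
open convex set is convex. -/
theorem stmt_9 (d : ℕ) (hd : 2 ≤ d) (Ω : Set (Fin d → ℝ)) (hΩo : IsOpen Ω)
    (hΩb : Bornology.IsBounded Ω) (hΩc : Convex ℝ Ω)
    (f : (Fin d → ℝ) → ℝ) (hfc : ContinuousOn f Ω) (hf0 : ∀ x ∈ Ω, 0 ≤ f x)
    (u : (Fin d → ℝ) → ℝ) (husc : UpperSemicontinuousOn u Ω)
    (hsub : ∀ φ : (Fin d → ℝ) → ℝ, ContDiffOn ℝ 2 φ Ω →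
      ∀ x ∈ Ω, IsLocalMaxOn (fun y => u y - φ y) Ω x →
        bellman d (hessianM d φ x) (f x) ≤ 0) :
    ConvexOn ℝ Ω u :=
  stmt_9_general d hd Ω hΩo hΩc f u husc hsub
end

section
/- Let Ω ⊆ ℝ^d be a bounded open set, f : cl(Ω) → [0,∞) continuous, and g : ∂Ω → ℝ. Then there is at most one continuous function u : cl(Ω) → ℝ which is a viscosity solution of the Bellman equation H(D²u, f) = 0 in Ω (i.e. simultaneously a viscosity subsolution and supersolution, where for every φ ∈ C²(Ω) such that u − φ attains a local maximum (resp. minimum) at x ∈ Ω one has H(D²φ(x), f(x)) ≤ 0 (resp. ≥ 0)) and satisfies u = g pointwise on ∂Ω. -/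
open Matrix Set

/-!
For fixed `B ∈ 𝐒₁` a viscosity subsolution `u` satisfies the constant-coefficient linear inequality
`f (det B)^(1/d) ≤ B : D²u` in the viscosity sense. The operator `B : D²` generates a symmetric
random walk, and comparing `u` with the smooth evolution of an approximation of `u` along that walk
shows that the averages of `u` over the walk grow at least linearly in time. This integrated form of
the inequality involves no derivatives, so it is inherited by the mollifications of `u`, for which
it is again a pointwise inequality between second derivatives. As `B` is arbitrary, the
mollifications are classical subsolutions of the Bellman equation, up to the oscillation of `f`.
Adding `α|x|²` makes them strict `C²` subsolutions uniformly close to `u`, hence admissible test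
functions for the supersolution property, and the comparison principle follows without doubling
variables.
-/

section RandomWalk

open Filter Topology

variable {ι E F : Type*} [Fintype ι] [NormedAddCommGroup E] [NormedSpace ℝ E]
  [NormedAddCommGroup F] [NormedSpace ℝ F]

/-- One step of the symmetric random walk which, from `x`, jumps to one of the points
`x ± h • b k` with equal probabilities, acting on functions by taking the expectation. The values
are allowed in any normed space so that the operator also acts on derivatives. -/
noncomputable def walkAverage (b : ι → E) (h : ℝ) : Module.End ℝ (E → F) where
  toFun g x := (2 * Fintype.card ι : ℝ)⁻¹ • ∑ k, (g (x + h • b k) + g (x - h • b k))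
  map_add' g g' := by
    ext x
    simp only [Pi.add_apply, ← smul_add, ← Finset.sum_add_distrib, add_add_add_comm]
  map_smul' c g := by
    ext x
    simp only [Pi.smul_apply, RingHom.id_apply, ← smul_add, ← Finset.smul_sum, smul_comm c]

/-- The generator `(2|ι|)⁻¹ ∑ₖ D²φ(bₖ, bₖ)` of the walk: the limit of
`h⁻² • (walkAverage b h φ - φ)` as `h → 0`. -/
noncomputable def walkGenerator (b : ι → E) (φ : E → ℝ) (x : E) : ℝ :=
  (2 * Fintype.card ι : ℝ)⁻¹ * ∑ k, fderiv ℝ (fderiv ℝ φ) x (b k) (b k)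

theorem walkAverage_apply (b : ι → E) (h : ℝ) (g : E → F) (x : E) :
    walkAverage b h g x =
      (2 * Fintype.card ι : ℝ)⁻¹ • ∑ k, (g (x + h • b k) + g (x - h • b k)) :=
  rfl

theorem walkAverage_mono (b : ι → E) (h : ℝ) :
    Monotone (walkAverage b h : Module.End ℝ (E → ℝ)) := by
  intro g g' hg x
  simp only [walkAverage_apply, smul_eq_mul]
  gcongr <;> apply hg

theorem walkAverage_pow_mono (b : ι → E) (h : ℝ) (n : ℕ) :
    Monotone (walkAverage b h ^ n : Module.End ℝ (E → ℝ)) := by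
  rw [Module.End.coe_pow]
  exact (walkAverage_mono b h).iterate n

section Nonempty

variable [Nonempty ι]

theorem walkAverage_const (b : ι → E) (h c : ℝ) :
    walkAverage b h (fun _ ↦ c) = fun _ ↦ c := by
  ext x
  simp only [walkAverage_apply, Finset.sum_const, Finset.card_univ, nsmul_eq_mul, smul_eq_mul]
  field

theorem walkAverage_pow_const (b : ι → E) (h c : ℝ) (n : ℕ) :
    (walkAverage b h ^ n) (fun _ ↦ c) = fun _ ↦ c := by
  rw [Module.End.coe_pow]
  exact Function.iterate_fixed (walkAverage_const b h c) n

theorem abs_walkAverage_pow_le (b : ι → E) (h : ℝ) (n : ℕ) {g : E → ℝ} {c : ℝ}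
    (hg : ∀ x, |g x| ≤ c) (x : E) : |(walkAverage b h ^ n) g x| ≤ c := by
  have hlower := walkAverage_pow_mono b h n (fun y ↦ (abs_le.1 (hg y)).1) x
  have hupper := walkAverage_pow_mono b h n (fun y ↦ (abs_le.1 (hg y)).2) x
  rw [walkAverage_pow_const] at hlower hupper
  exact abs_le.2 ⟨hlower, hupper⟩

theorem abs_walkAverage_pow_sub_pow_le (b : ι → E) (h : ℝ) (n : ℕ) {g g' : E → ℝ} {c : ℝ}
    (hg : ∀ x, |g x - g' x| ≤ c) (x : E) :
    |(walkAverage b h ^ n) g x - (walkAverage b h ^ n) g' x| ≤ c := by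
  have := abs_walkAverage_pow_le b h n (g := g - g') hg x
  rwa [map_sub] at this

theorem abs_walkAverage_pow_sub_self_le (b : ι → E) (h : ℝ) {g : E → ℝ} {c : ℝ}
    (hg : ∀ x, |walkAverage b h g x - g x| ≤ c) (n : ℕ) (x : E) :
    |(walkAverage b h ^ n) g x - g x| ≤ n * c := by
  induction n with
  | zero => simp
  | succ n ih =>
    have hstep := abs_walkAverage_pow_sub_pow_le b h n hg x
    rw [← Module.End.mul_apply, ← pow_succ] at hstep
    calc |(walkAverage b h ^ (n + 1)) g x - g x|
        ≤ |(walkAverage b h ^ (n + 1)) g x - (walkAverage b h ^ n) g x|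
          + |(walkAverage b h ^ n) g x - g x| := abs_sub_le _ _ _
      _ ≤ c + n * c := add_le_add hstep ih
      _ = ↑(n + 1) * c := by push_cast; ring

end Nonempty

theorem continuous_walkAverage_pow (b : ι → E) (h : ℝ) {g : E → ℝ} (hg : Continuous g) (n : ℕ) :
    Continuous ((walkAverage b h ^ n) g) := by
  induction n with
  | zero => exact hg
  | succ n ih =>
    rw [pow_succ', Module.End.mul_apply]
    simp only [funext (walkAverage_apply b h _)]
    fun_prop

theorem contDiff_walkAverage_pow (b : ι → E) (h : ℝ) {g : E → ℝ} {m : WithTop ℕ∞}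
    (hg : ContDiff ℝ m g) (n : ℕ) : ContDiff ℝ m ((walkAverage b h ^ n) g) := by
  induction n with
  | zero => exact hg
  | succ n ih =>
    rw [pow_succ', Module.End.mul_apply]
    simp only [funext (walkAverage_apply b h _)]
    fun_prop

theorem fderiv_walkAverage (b : ι → E) (h : ℝ) {g : E → F} (hg : Differentiable ℝ g) :
    fderiv ℝ (walkAverage b h g) = walkAverage b h (fderiv ℝ g) := by
  ext1 x
  have hshift (v : E) : HasFDerivAt (fun y ↦ g (y + v)) (fderiv ℝ g (x + v)) x :=
    (hasFDerivAt_comp_add_right v).2 (hg _).hasFDerivAt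
  refine ((HasFDerivAt.fun_sum fun k _ ↦ (hshift (h • b k)).add ?_).const_smul _).fderiv
  simpa only [sub_eq_add_neg] using hshift (-(h • b k))

theorem walkGenerator_walkAverage (b : ι → E) (h : ℝ) {φ : E → ℝ} (hφ : ContDiff ℝ 2 φ) :
    walkGenerator b (walkAverage b h φ) = walkAverage b h (walkGenerator b φ) := by
  have hφ' : ContDiff ℝ 1 (fderiv ℝ φ) := hφ.fderiv_right (by norm_num)
  ext x
  simp only [walkGenerator, fderiv_walkAverage b h (hφ.differentiable two_ne_zero),
    fderiv_walkAverage b h (hφ'.differentiable one_ne_zero), walkAverage_apply,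
    _root_.smul_apply, _root_.sum_apply, _root_.add_apply, smul_eq_mul, ← Finset.mul_sum,
    ← mul_add, ← Finset.sum_add_distrib]
  rw [Finset.sum_comm]

theorem walkGenerator_walkAverage_pow (b : ι → E) (h : ℝ) {φ : E → ℝ} (hφ : ContDiff ℝ 2 φ)
    (n : ℕ) :
    walkGenerator b ((walkAverage b h ^ n) φ) = (walkAverage b h ^ n) (walkGenerator b φ) := by
  induction n with
  | zero => rfl
  | succ n ih =>
    rw [pow_succ', Module.End.mul_apply, Module.End.mul_apply, ← ih,
      walkGenerator_walkAverage b h (contDiff_walkAverage_pow b h hφ n)]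

theorem continuous_fderiv_fderiv {φ : E → ℝ} (hφ : ContDiff ℝ 2 φ) :
    Continuous (fderiv ℝ (fderiv ℝ φ)) :=
  (hφ.fderiv_right (m := 1) (by norm_num)).continuous_fderiv one_ne_zero

theorem continuous_walkGenerator (b : ι → E) {φ : E → ℝ} (hφ : ContDiff ℝ 2 φ) :
    Continuous (walkGenerator b φ) := by
  have := continuous_fderiv_fderiv hφ
  unfold walkGenerator
  fun_prop

theorem hasCompactSupport_walkGenerator (b : ι → E) {φ : E → ℝ} (hφ : HasCompactSupport φ) :
    HasCompactSupport (walkGenerator b φ) :=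
  ((hφ.fderiv ℝ).fderiv ℝ).comp_left
    (g := fun A : E →L[ℝ] E →L[ℝ] ℝ ↦ (2 * Fintype.card ι : ℝ)⁻¹ * ∑ k, A (b k) (b k)) (by simp)

theorem walkGenerator_add (b : ι → E) {φ ψ : E → ℝ} (hφ : ContDiff ℝ 2 φ)
    (hψ : ContDiff ℝ 2 ψ) :
    walkGenerator b (φ + ψ) = walkGenerator b φ + walkGenerator b ψ := by
  ext x
  have hsplit (v w : E) : fderiv ℝ (fderiv ℝ (φ + ψ)) x v w =
      fderiv ℝ (fderiv ℝ φ) x v w + fderiv ℝ (fderiv ℝ ψ) x v w := by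
    simpa [iteratedFDeriv_two_apply] using
      congr($(iteratedFDeriv_add_apply (x := x) hφ.contDiffAt hψ.contDiffAt) ![v, w])
  simp only [walkGenerator, hsplit, Finset.sum_add_distrib, mul_add, Pi.add_apply]

theorem walkGenerator_const_sub (b : ι → E) (c : ℝ) (φ : E → ℝ) :
    walkGenerator b (fun x ↦ c - φ x) = -walkGenerator b φ := by
  ext x
  have hneg : fderiv ℝ (fun y ↦ c - φ y) = -fderiv ℝ φ := funext fun y ↦ fderiv_const_sub c
  simp only [walkGenerator, hneg, fderiv_neg, _root_.neg_apply, Finset.sum_neg_distrib, mul_neg,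
    Pi.neg_apply]

theorem walkGenerator_const_smul (b : ι → E) (c : ℝ) (φ : E → ℝ) :
    walkGenerator b (c • φ) = c • walkGenerator b φ := by
  ext x
  have hsmul : fderiv ℝ (fderiv ℝ (c • φ)) = c • fderiv ℝ (fderiv ℝ φ) := by
    rw [fderiv_const_smul_field]
    exact fderiv_const_smul_field (f := fderiv ℝ φ) c
  simp only [walkGenerator, hsmul, Pi.smul_apply, _root_.smul_apply, smul_eq_mul,
    ← Finset.mul_sum, mul_left_comm]

/-- `U` is a viscosity solution of `m ≤ walkGenerator b U` at the points of `s`. -/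
def IsWalkSubsolutionOn (b : ι → E) (m : ℝ) (U : E → ℝ) (s : Set E) : Prop :=
  ∀ χ : E → ℝ, ContDiff ℝ 2 χ → ∀ x ∈ s, IsLocalMax (fun y ↦ U y - χ y) x →
    m ≤ walkGenerator b χ x

theorem second_difference_le {g g' g'' : ℝ → ℝ} {c h : ℝ} (hg : ∀ s, HasDerivAt g (g' s) s)
    (hg' : ∀ s, HasDerivAt g' (g'' s) s) (hc : ∀ s, |s| ≤ |h| → g'' s ≤ c) :
    g h + g (-h) - 2 * g 0 ≤ h ^ 2 * c := by
  have hconcave : ConcaveOn ℝ (Icc (-|h|) |h|) fun s ↦ g s - c * s ^ 2 / 2 := by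
    have hderiv (s : ℝ) : HasDerivAt (fun s ↦ g s - c * s ^ 2 / 2) (g' s - c * s) s :=
      ((hg s).sub (((hasDerivAt_pow 2 s).const_mul c).div_const 2)).congr_deriv (by norm_num; ring)
    have hderiv' (s : ℝ) : HasDerivAt (fun s ↦ g' s - c * s) (g'' s - c) s :=
      ((hg' s).sub ((hasDerivAt_id s).const_mul c)).congr_deriv (by ring)
    exact concaveOn_of_hasDerivWithinAt2_nonpos (convex_Icc _ _)
      (fun s _ ↦ (hderiv s).continuousAt.continuousWithinAt)
      (fun s _ ↦ (hderiv s).hasDerivWithinAt) (fun s _ ↦ (hderiv' s).hasDerivWithinAt)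
      fun s hs ↦ sub_nonpos.2 (hc s (abs_le.2 (mem_Icc.1 (interior_subset hs))))
  have hmid := hconcave.2 (abs_le.1 le_rfl : h ∈ Icc (-|h|) |h|) (abs_le.1 (abs_neg h).le)
    (by norm_num : (0 : ℝ) ≤ 1 / 2) (by norm_num : (0 : ℝ) ≤ 1 / 2) (by norm_num)
  simp only [smul_eq_mul, mul_neg, add_neg_cancel] at hmid
  linarith

theorem abs_second_difference_sub_le {g g' g'' : ℝ → ℝ} {c e h : ℝ}
    (hg : ∀ s, HasDerivAt g (g' s) s) (hg' : ∀ s, HasDerivAt g' (g'' s) s)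
    (hc : ∀ s, |s| ≤ |h| → |g'' s - c| ≤ e) :
    |g h + g (-h) - 2 * g 0 - h ^ 2 * c| ≤ h ^ 2 * e := by
  have hupper := second_difference_le hg hg' (h := h) (c := c + e)
    fun s hs ↦ by linarith [(abs_le.1 (hc s hs)).2]
  have hlower := second_difference_le (fun s ↦ (hg s).neg) (fun s ↦ (hg' s).neg) (h := h)
    (c := e - c) fun s hs ↦ by linarith [(abs_le.1 (hc s hs)).1]
  simp only [Pi.neg_apply] at hlower
  exact abs_le.2 ⟨by linarith, by linarith⟩

theorem eventually_abs_second_difference_sub_le {φ : E → ℝ} (hφ : ContDiff ℝ 2 φ) {v : E}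
    (huc : UniformContinuous fun x ↦ fderiv ℝ (fderiv ℝ φ) x v v) {e : ℝ} (he : 0 < e) :
    ∀ᶠ h : ℝ in 𝓝 0, ∀ x,
      |φ (x + h • v) + φ (x - h • v) - 2 * φ x - h ^ 2 * fderiv ℝ (fderiv ℝ φ) x v v|
        ≤ h ^ 2 * e := by
  obtain ⟨δ, hδ, hclose⟩ := Metric.uniformContinuous_iff.1 huc e he
  have hsmall : ∀ᶠ h : ℝ in 𝓝 0, |h| * ‖v‖ < δ :=
    Continuous.tendsto' (by fun_prop) 0 0 (by simp) |>.eventually_lt_const hδ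
  filter_upwards [hsmall] with h hh x
  have hline (s : ℝ) : HasDerivAt (fun s : ℝ ↦ x + s • v) v s := by
    simpa using ((hasDerivAt_id s).smul_const v).const_add x
  have hφ' : ContDiff ℝ 1 (fderiv ℝ φ) := hφ.fderiv_right (by norm_num)
  have hderiv (s : ℝ) : HasDerivAt (fun s : ℝ ↦ φ (x + s • v)) (fderiv ℝ φ (x + s • v) v) s :=
    (hφ.differentiable two_ne_zero _).hasFDerivAt.comp_hasDerivAt s (hline s)
  have hderiv' (s : ℝ) : HasDerivAt (fun s : ℝ ↦ fderiv ℝ φ (x + s • v) v)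
      (fderiv ℝ (fderiv ℝ φ) (x + s • v) v v) s := by
    simpa using ((hφ'.differentiable one_ne_zero _).hasFDerivAt.comp_hasDerivAt s
      (hline s)).clm_apply (hasDerivAt_const s v)
  have hball (s : ℝ) (hs : |s| ≤ |h|) : dist (x + s • v) x < δ := by
    rw [dist_self_add_left, norm_smul, Real.norm_eq_abs]
    exact (by gcongr : |s| * ‖v‖ ≤ |h| * ‖v‖).trans_lt hh
  simpa [sub_eq_add_neg] using
    abs_second_difference_sub_le hderiv hderiv' fun s hs ↦ (hclose (hball s hs)).le

theorem uniformContinuous_fderiv_fderiv_apply {φ : E → ℝ} (hφ : ContDiff ℝ 2 φ)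
    (hs : HasCompactSupport φ) (v : E) :
    UniformContinuous fun x ↦ fderiv ℝ (fderiv ℝ φ) x v v := by
  have := continuous_fderiv_fderiv hφ
  exact HasCompactSupport.uniformContinuous_of_continuous
    (((hs.fderiv ℝ).fderiv ℝ).comp_left (g := fun A : E →L[ℝ] E →L[ℝ] ℝ ↦ A v v) (by simp))
    (by fun_prop)

theorem exists_forall_abs_walkGenerator_le (b : ι → E) {φ : E → ℝ} (hφ : ContDiff ℝ 2 φ)
    (hs : HasCompactSupport φ) : ∃ C, 0 ≤ C ∧ ∀ x, |walkGenerator b φ x| ≤ C := by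
  obtain ⟨C, hC⟩ := (hasCompactSupport_walkGenerator b hs).exists_bound_of_continuous
    (continuous_walkGenerator b hφ)
  exact ⟨C, (norm_nonneg _).trans (hC 0), hC⟩

theorem uniformContinuous_walkGenerator (b : ι → E) {φ : E → ℝ} (hφ : ContDiff ℝ 2 φ)
    (hs : HasCompactSupport φ) : UniformContinuous (walkGenerator b φ) :=
  (hasCompactSupport_walkGenerator b hs).uniformContinuous_of_continuous
    (continuous_walkGenerator b hφ)

section Nonempty

variable [Nonempty ι]

theorem walkAverage_sub_self (b : ι → E) (h : ℝ) (g : E → ℝ) (x : E) :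
    walkAverage b h g x - g x =
      (2 * Fintype.card ι : ℝ)⁻¹ * ∑ k, (g (x + h • b k) + g (x - h • b k) - 2 * g x) := by
  simp only [walkAverage_apply, smul_eq_mul, Finset.sum_sub_distrib, Finset.sum_const,
    Finset.card_univ, nsmul_eq_mul]
  field

theorem abs_inv_two_mul_card_mul_sum_le {a : ι → ℝ} {e : ℝ} (ha : ∀ k, |a k| ≤ 2 * e) :
    |(2 * Fintype.card ι : ℝ)⁻¹ * ∑ k, a k| ≤ e := by
  rw [abs_mul, abs_of_nonneg (by positivity)]
  calc (2 * Fintype.card ι : ℝ)⁻¹ * |∑ k, a k|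
      ≤ (2 * Fintype.card ι : ℝ)⁻¹ * ∑ _k : ι, 2 * e := by
        gcongr
        exact (Finset.abs_sum_le_sum_abs _ _).trans (Finset.sum_le_sum fun k _ ↦ ha k)
    _ = e := by
        simp only [Finset.sum_const, Finset.card_univ, nsmul_eq_mul]
        field

theorem eventually_abs_walkAverage_sub_self_le (b : ι → E) {g : E → ℝ}
    (hg : UniformContinuous g) {e : ℝ} (he : 0 < e) :
    ∀ᶠ h : ℝ in 𝓝 0, ∀ x, |walkAverage b h g x - g x| ≤ e := by
  obtain ⟨δ, hδ, hclose⟩ := Metric.uniformContinuous_iff.1 hg e he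
  have hsmall (k : ι) : ∀ᶠ h : ℝ in 𝓝 0, ‖h • b k‖ < δ :=
    Continuous.tendsto' (by fun_prop) 0 0 (by simp) |>.eventually_lt_const hδ
  filter_upwards [eventually_all.2 hsmall] with h hh x
  rw [walkAverage_sub_self]
  refine abs_inv_two_mul_card_mul_sum_le fun k ↦ ?_
  have hadd : |g (x + h • b k) - g x| < e := hclose (by simpa [dist_eq_norm] using hh k)
  have hsub : |g (x - h • b k) - g x| < e := hclose (by simpa [dist_eq_norm] using hh k)
  rw [abs_lt] at hadd hsub
  exact abs_le.2 ⟨by linarith, by linarith⟩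

theorem eventually_abs_walkAverage_sub_walkGenerator_le (b : ι → E) {φ : E → ℝ}
    (hφ : ContDiff ℝ 2 φ) (hs : HasCompactSupport φ) {e : ℝ} (he : 0 < e) :
    ∀ᶠ h : ℝ in 𝓝 0, ∀ x,
      |walkAverage b h φ x - φ x - h ^ 2 * walkGenerator b φ x| ≤ h ^ 2 * e := by
  have htaylor (k : ι) := eventually_abs_second_difference_sub_le hφ
    (uniformContinuous_fderiv_fderiv_apply hφ hs (b k)) (by positivity : 0 < 2 * e)
  filter_upwards [eventually_all.2 htaylor] with h hh x
  rw [walkAverage_sub_self, walkGenerator, mul_left_comm, ← mul_sub, Finset.mul_sum,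
    ← Finset.sum_sub_distrib]
  exact abs_inv_two_mul_card_mul_sum_le fun k ↦ (hh k x).trans_eq (mul_left_comm _ _ _)

theorem eventually_abs_walkAverage_sub_walkAverage_walkGenerator_le (b : ι → E) {φ : E → ℝ}
    (hφ : ContDiff ℝ 2 φ) (hs : HasCompactSupport φ) {e : ℝ} (he : 0 < e) :
    ∀ᶠ h : ℝ in 𝓝 0, ∀ x,
      |walkAverage b h φ x - φ x - h ^ 2 * walkAverage b h (walkGenerator b φ) x|
        ≤ h ^ 2 * e := by
  filter_upwards [eventually_abs_walkAverage_sub_walkGenerator_le b hφ hs (half_pos he),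
    eventually_abs_walkAverage_sub_self_le b (uniformContinuous_walkGenerator b hφ hs)
      (half_pos he)] with h hcons hgen x
  calc |walkAverage b h φ x - φ x - h ^ 2 * walkAverage b h (walkGenerator b φ) x|
      = |(walkAverage b h φ x - φ x - h ^ 2 * walkGenerator b φ x)
          - h ^ 2 * (walkAverage b h (walkGenerator b φ) x - walkGenerator b φ x)| := by
        congr 1; ring
    _ ≤ h ^ 2 * (e / 2) + h ^ 2 * (e / 2) := by
        refine (abs_sub _ _).trans (add_le_add (hcons x) ?_)
        rw [abs_mul, abs_of_nonneg (sq_nonneg h)]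
        gcongr
        exact hgen x
    _ = h ^ 2 * e := by ring

theorem abs_walkAverage_pow_succ_sub_le (b : ι → E) {h c e : ℝ} {φ g : E → ℝ}
    (hcons : ∀ x, |walkAverage b h φ x - φ x - c * g x| ≤ e) (n : ℕ) (x : E) :
    |(walkAverage b h ^ (n + 1)) φ x - (walkAverage b h ^ n) φ x
      - c * (walkAverage b h ^ n) g x| ≤ e := by
  have := abs_walkAverage_pow_le b h n (g := walkAverage b h φ - φ - c • g) hcons x
  rwa [map_sub, map_sub, map_smul, ← Module.End.mul_apply, ← pow_succ] at this

theorem IsWalkSubsolutionOn.parabolic_comparison {b : ι → E} {h m c e κ : ℝ} {U φ q : E → ℝ}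
    {K V : Set E} (hsub : IsWalkSubsolutionOn b m U V) (hU : Continuous U)
    (hφ : ContDiff ℝ 2 φ) (hq : ContDiff ℝ 2 q) (hK : IsCompact K) (hV : IsOpen V)
    (hVK : V ⊆ K) (hqc : ∀ x, walkGenerator b q x ≤ c)
    (hcons : ∀ x,
      |walkAverage b h φ x - φ x - h ^ 2 * walkAverage b h (walkGenerator b φ) x| ≤ h ^ 2 * e)
    {n : ℕ} (hinit : ∀ x ∈ K, U x ≤ φ x + q x + κ)
    (hbdry : ∀ k ≤ n, ∀ x ∈ K \ V,
      U x + k * h ^ 2 * (m - c - e) ≤ (walkAverage b h ^ k) φ x + q x + κ) :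
    ∀ k ≤ n, ∀ x ∈ K, U x + k * h ^ 2 * (m - c - e) ≤ (walkAverage b h ^ k) φ x + q x + κ := by
  intro k
  induction k with
  | zero => simpa using hinit
  | succ k ih =>
    intro hk x hx
    have hφk := contDiff_walkAverage_pow b h hφ (k + 1)
    have hcont : Continuous fun y ↦ U y - ((walkAverage b h ^ (k + 1)) φ + q) y :=
      hU.sub (hφk.continuous.add hq.continuous)
    obtain ⟨x₀, hx₀, hmax⟩ := hK.exists_isMaxOn ⟨x, hx⟩ hcont.continuousOn
    suffices hx₀le : U x₀ + ↑(k + 1) * h ^ 2 * (m - c - e)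
        ≤ (walkAverage b h ^ (k + 1)) φ x₀ + q x₀ + κ by
      have hxle := isMaxOn_iff.1 hmax x hx
      simp only [Pi.add_apply] at hxle
      linarith
    by_cases hx₀V : x₀ ∈ V
    · have htest : m ≤ (walkAverage b h ^ k) (walkAverage b h (walkGenerator b φ)) x₀ + c := by
        have := hsub (_ + q) (hφk.add hq) x₀ hx₀V
          (hmax.isLocalMax (mem_of_superset (hV.mem_nhds hx₀V) hVK))
        rw [walkGenerator_add b hφk hq, walkGenerator_walkAverage_pow b h hφ, pow_succ,
          Module.End.mul_apply] at this
        exact this.trans (add_le_add_right (hqc x₀) _)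
      have hstep := (abs_le.1 (abs_walkAverage_pow_succ_sub_le b hcons k x₀)).1
      have hprev := ih (Nat.le_of_succ_le hk) x₀ hx₀
      have hgain := mul_le_mul_of_nonneg_left htest (sq_nonneg h)
      push_cast
      linarith
    · exact hbdry (k + 1) hk x₀ ⟨hx₀, hx₀V⟩

end Nonempty

section FiniteDimensional

variable [FiniteDimensional ℝ E]

theorem exists_contDiff_hasCompactSupport_approx {g : E → ℝ} (hg : Continuous g)
    (hs : HasCompactSupport g) {e : ℝ} (he : 0 < e) :
    ∃ φ : E → ℝ, ContDiff ℝ 2 φ ∧ HasCompactSupport φ ∧ ∀ x, |φ x - g x| ≤ e := by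
  obtain ⟨φ, hφ, hclose, hsupp⟩ :=
    hg.exists_contDiff_approx 2 (continuous_const (y := e)) fun _ ↦ he
  exact ⟨φ, hφ, hs.mono hsupp, fun x ↦ (hclose x).le⟩

theorem exists_walk_barrier (b : ι → E) (z : E) {R e : ℝ} (hR : 0 < R) (he : 0 < e) :
    ∃ δ > 0, ∃ q : E → ℝ, ContDiff ℝ 2 q ∧ (∀ x, 0 ≤ q x) ∧ (∀ x, walkGenerator b q x ≤ e) ∧
      (∀ x ∈ Metric.ball z R, q x = 0) ∧ ∀ x ∉ Metric.ball z (2 * R), q x = δ := by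
  let ζ : ContDiffBump z := ⟨R, 2 * R, hR, by linarith⟩
  have hζ : ContDiff ℝ 2 ζ := ζ.contDiff
  obtain ⟨C, hC0, hC⟩ := exists_forall_abs_walkGenerator_le b hζ ζ.hasCompactSupport
  set δ := e / (C + 1) with hδ
  have hδ0 : 0 < δ := by positivity
  refine ⟨δ, hδ0, fun x ↦ δ - (δ • ⇑ζ) x, by fun_prop, fun x ↦ ?_, fun x ↦ ?_, fun x hx ↦ ?_,
    fun x hx ↦ ?_⟩
  · exact sub_nonneg.2 (mul_le_of_le_one_right hδ0.le ζ.le_one)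
  · rw [walkGenerator_const_sub, walkGenerator_const_smul]
    calc -(δ * walkGenerator b ζ x) ≤ δ * (C + 1) := by
          rw [← mul_neg]
          gcongr
          linarith [(abs_le.1 (hC x)).1]
      _ = e := by rw [hδ]; field
  · simp [ζ.one_of_mem_closedBall (Metric.ball_subset_closedBall hx)]
  · simp [ζ.zero_of_le_dist (not_lt.1 hx)]

variable [Nonempty ι]

theorem eventually_abs_walkAverage_pow_sub_self_le (b : ι → E) {g : E → ℝ} (hg : Continuous g)
    (hs : HasCompactSupport g) {e : ℝ} (he : 0 < e) :
    ∀ᶠ t : ℝ in 𝓝[>] 0, ∀ᶠ h : ℝ in 𝓝 0, ∀ k : ℕ, k * h ^ 2 ≤ t →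
      ∀ x, |(walkAverage b h ^ k) g x - g x| ≤ e := by
  obtain ⟨φ, hφ, hφs, hφg⟩ :=
    exists_contDiff_hasCompactSupport_approx hg hs (e := e / 3) (by positivity)
  obtain ⟨C, hC0, hC⟩ := exists_forall_abs_walkGenerator_le b hφ hφs
  have hsmall : ∀ᶠ t : ℝ in 𝓝[>] 0, t * (C + 1) < e / 3 :=
    (Continuous.tendsto' (by fun_prop) 0 0 (by simp)).mono_left nhdsWithin_le_nhds
      |>.eventually_lt_const (by positivity)
  filter_upwards [hsmall] with t ht
  filter_upwards [eventually_abs_walkAverage_sub_walkGenerator_le b hφ hφs one_pos]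
    with h hcons k hk x
  have hstep (y : E) : |walkAverage b h φ y - φ y| ≤ h ^ 2 * (C + 1) := by
    have hgen : |h ^ 2 * walkGenerator b φ y| ≤ h ^ 2 * C := by
      rw [abs_mul, abs_of_nonneg (sq_nonneg h)]
      exact mul_le_mul_of_nonneg_left (hC y) (sq_nonneg h)
    linarith [abs_sub_abs_le_abs_sub (walkAverage b h φ y - φ y) (h ^ 2 * walkGenerator b φ y),
      hcons y]
  have hφk : |(walkAverage b h ^ k) φ x - φ x| ≤ e / 3 :=
    calc |(walkAverage b h ^ k) φ x - φ x| ≤ k * (h ^ 2 * (C + 1)) :=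
          abs_walkAverage_pow_sub_self_le b h hstep k x
      _ = k * h ^ 2 * (C + 1) := by ring
      _ ≤ t * (C + 1) := by gcongr
      _ ≤ e / 3 := ht.le
  have hgk := abs_walkAverage_pow_sub_pow_le b h k hφg x
  have hgx := hφg x
  rw [abs_le] at hφk hgk hgx ⊢
  constructor <;> linarith

theorem eventually_walkAverage_pow_le_add_walkGenerator (b : ι → E) {ψ : E → ℝ}
    (hψ : ContDiff ℝ 2 ψ) (hs : HasCompactSupport ψ) {e : ℝ} (he : 0 < e) :
    ∀ᶠ t : ℝ in 𝓝[>] 0, ∀ᶠ h : ℝ in 𝓝 0, ∀ k : ℕ, k * h ^ 2 ≤ t →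
      ∀ x, (walkAverage b h ^ k) ψ x ≤ ψ x + k * h ^ 2 * (walkGenerator b ψ x + e) := by
  filter_upwards [eventually_abs_walkAverage_pow_sub_self_le b (continuous_walkGenerator b hψ)
    (hasCompactSupport_walkGenerator b hs) (half_pos he)] with t ht
  filter_upwards [ht, eventually_abs_walkAverage_sub_walkGenerator_le b hψ hs (half_pos he)]
    with h hgen hcons k
  induction k with
  | zero => simp
  | succ k ih =>
    intro hk x
    push_cast at hk ⊢
    have hk' : k * h ^ 2 ≤ t := by nlinarith
    have hstep := (abs_le.1 (abs_walkAverage_pow_succ_sub_le b hcons k x)).2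
    have hgain := mul_le_mul_of_nonneg_left (abs_le.1 (hgen k hk' x)).2 (sq_nonneg h)
    linarith [ih hk' x]

theorem IsWalkSubsolutionOn.eventually_add_le_walkAverage_pow {b : ι → E} {m : ℝ} {U : E → ℝ}
    {z : E} {R : ℝ} (hsub : IsWalkSubsolutionOn b m U (Metric.ball z (2 * R)))
    (hU : Continuous U) (hs : HasCompactSupport U) (hR : 0 < R) {e : ℝ} (he : 0 < e) :
    ∀ᶠ t : ℝ in 𝓝[>] 0, ∀ᶠ h : ℝ in 𝓝 0, ∀ n : ℕ, n * h ^ 2 = t →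
      ∀ x ∈ Metric.ball z R, U x + t * (m - e) ≤ (walkAverage b h ^ n) U x := by
  obtain ⟨δ, hδ, q, hq, hq0, hqe, hqin, hqout⟩ :=
    exists_walk_barrier b z hR (e := e / 4) (by positivity)
  set m' := m - e / 4 - e / 4
  have hsmall : ∀ᶠ t : ℝ in 𝓝[>] 0, t * |m'| < δ / 2 :=
    (Continuous.tendsto' (by fun_prop) 0 0 (by simp)).mono_left nhdsWithin_le_nhds
      |>.eventually_lt_const (by positivity)
  filter_upwards [self_mem_nhdsWithin, hsmall,
    eventually_abs_walkAverage_pow_sub_self_le b hU hs (half_pos hδ)] with t ht htδ hUt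
  have ht0 : 0 < t := ht
  obtain ⟨φ, hφ, hφs, hφU⟩ :=
    exists_contDiff_hasCompactSupport_approx hU hs (e := e * t / 4) (by positivity)
  filter_upwards [hUt, eventually_abs_walkAverage_sub_walkAverage_walkGenerator_le b hφ hφs
    (e := e / 4) (by positivity)] with h hUh hcons n hn x hx
  have hinit (y : E) : U y ≤ φ y + q y + e * t / 4 := by
    linarith [(abs_le.1 (hφU y)).1, hq0 y]
  -- Outside the large ball the barrier `q = δ` absorbs both the drift and the change of `U`.
  have hbdry (k : ℕ) (hk : k ≤ n) (y : E) (hy : y ∉ Metric.ball z (2 * R)) :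
      U y + k * h ^ 2 * m' ≤ (walkAverage b h ^ k) φ y + q y + e * t / 4 := by
    have hkt : k * h ^ 2 ≤ t := hn ▸ by gcongr
    have hdrift : k * h ^ 2 * m' ≤ t * |m'| :=
      (mul_le_mul_of_nonneg_left (le_abs_self m') (by positivity)).trans (by gcongr)
    linarith [(abs_le.1 (hUh k hkt y)).1, hqout y hy,
      (abs_le.1 (abs_walkAverage_pow_sub_pow_le b h k hφU y)).1]
  have hx' : x ∈ Metric.closedBall z (2 * R) :=
    Metric.closedBall_subset_closedBall (by linarith) (Metric.ball_subset_closedBall hx)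
  have hfinal := hsub.parabolic_comparison hU hφ hq (isCompact_closedBall z (2 * R))
    Metric.isOpen_ball Metric.ball_subset_closedBall hqe hcons (fun y _ ↦ hinit y)
    (fun k hk y hy ↦ hbdry k hk y hy.2) n le_rfl x hx'
  rw [hn, hqin x hx] at hfinal
  linarith [(abs_le.1 (abs_walkAverage_pow_sub_pow_le b h n hφU x)).2]

end FiniteDimensional

end RandomWalk

section Mollification

open Filter MeasureTheory Topology

variable {ι E : Type*} [Fintype ι] [NormedAddCommGroup E] [NormedSpace ℝ E]
  [FiniteDimensional ℝ E] [MeasurableSpace E] (μ : Measure E) (η : ContDiffBump (0 : E))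

/-- The mollification `η ⋆ U` of `U` by the bump function `η`, normalised to have `μ`-integral
one. -/
noncomputable def mollify (U : E → ℝ) : E → ℝ :=
  convolution (η.normed μ) U (ContinuousLinearMap.lsmul ℝ ℝ) μ

theorem mollify_apply (U : E → ℝ) (x : E) :
    mollify μ η U x = ∫ t, η.normed μ t * U (x - t) ∂μ :=
  rfl

variable [BorelSpace E] [μ.IsAddHaarMeasure] {U V : E → ℝ}

theorem contDiff_mollify {n : ℕ∞} (hU : Continuous U) : ContDiff ℝ n (mollify μ η U) :=
  η.hasCompactSupport_normed.contDiff_convolution_left _ η.contDiff_normed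
    hU.locallyIntegrable

theorem hasCompactSupport_mollify (hs : HasCompactSupport U) :
    HasCompactSupport (mollify μ η U) :=
  η.hasCompactSupport_normed.convolution _ hs

theorem exists_forall_abs_mollify_sub_le (hU : UniformContinuous U) {e : ℝ} (he : 0 < e) :
    ∃ r > 0, ∀ η : ContDiffBump (0 : E), η.rOut ≤ r → ∀ x, |mollify μ η U x - U x| ≤ e := by
  obtain ⟨r, hr, hclose⟩ := Metric.uniformContinuous_iff.1 hU e he
  exact ⟨r, hr, fun η hη x ↦ ContDiffBump.dist_normed_convolution_le
    hU.continuous.aestronglyMeasurable fun y hy ↦ (hclose (hy.trans_le hη)).le⟩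

theorem integrable_normed_mul_comp_sub (hU : Continuous U) (x : E) :
    Integrable (fun t ↦ η.normed μ t * U (x - t)) μ := by
  have hη : Continuous (η.normed μ) := η.continuous_normed
  exact Continuous.integrable_of_hasCompactSupport (by fun_prop)
    η.hasCompactSupport_normed.mul_right

theorem mollify_add_const_le (hU : Continuous U) (hV : Continuous V) {z : E} {c : ℝ}
    (hle : ∀ x ∈ Metric.ball z η.rOut, U x + c ≤ V x) :
    mollify μ η U z + c ≤ mollify μ η V z := by
  have hconst : Integrable (fun t ↦ η.normed μ t * c) μ := η.integrable_normed.mul_const c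
  calc mollify μ η U z + c = ∫ t, η.normed μ t * U (z - t) + η.normed μ t * c ∂μ := by
        rw [integral_add (integrable_normed_mul_comp_sub μ η hU z) hconst, integral_mul_const,
          η.integral_normed, one_mul, mollify_apply]
    _ ≤ mollify μ η V z := by
        refine integral_mono ((integrable_normed_mul_comp_sub μ η hU z).add hconst)
          (integrable_normed_mul_comp_sub μ η hV z) fun t ↦ ?_
        rcases lt_or_ge (dist t 0) η.rOut with ht | ht
        · simp only [← mul_add]
          exact mul_le_mul_of_nonneg_left (hle _ (by simpa [dist_eq_norm] using ht))
            (η.nonneg_normed t)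
        · have hzero : η.normed μ t = 0 := by
            rw [ContDiffBump.normed_def, η.zero_of_le_dist ht, zero_div]
          simp [hzero]

theorem walkAverage_mollify (b : ι → E) (h : ℝ) (hU : Continuous U) :
    walkAverage b h (mollify μ η U) = mollify μ η (walkAverage b h U) := by
  ext x
  have hint := integrable_normed_mul_comp_sub μ η hU
  simp only [mollify_apply, walkAverage_apply, smul_eq_mul, mul_left_comm (η.normed μ _),
    integral_const_mul, sub_add_eq_add_sub, sub_right_comm _ _ (h • b _)]
  congr 1
  simp only [Finset.mul_sum, mul_add]
  rw [integral_finsetSum _ fun k _ ↦ (hint (x + h • b k)).fun_add (hint (x - h • b k))]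
  simp only [integral_add (hint _) (hint _)]

theorem walkAverage_pow_mollify (b : ι → E) (h : ℝ) (hU : Continuous U) (n : ℕ) :
    (walkAverage b h ^ n) (mollify μ η U) = mollify μ η ((walkAverage b h ^ n) U) := by
  induction n with
  | zero => rfl
  | succ n ih =>
    rw [pow_succ', Module.End.mul_apply, ih,
      walkAverage_mollify μ η b h (continuous_walkAverage_pow b h hU n), Module.End.mul_apply]

theorem frequently_exists_natCast_mul_sq_eq {t : ℝ} (ht : 0 < t) :
    ∃ᶠ h : ℝ in 𝓝 0, ∃ n : ℕ, n * h ^ 2 = t := by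
  have hlim : Tendsto (fun n : ℕ ↦ √(t / n)) atTop (𝓝 0) := by
    simpa using (tendsto_const_div_atTop_nhds_zero_nat t).sqrt
  refine hlim.frequently (Eventually.frequently ?_)
  filter_upwards [eventually_ne_atTop 0] with n hn
  exact ⟨n, by rw [Real.sq_sqrt (by positivity)]; field⟩

theorem IsWalkSubsolutionOn.le_walkGenerator_mollify [Nonempty ι] {b : ι → E} {m : ℝ} {z : E}
    (hsub : IsWalkSubsolutionOn b m U (Metric.ball z (2 * η.rOut)))
    (hU : Continuous U) (hs : HasCompactSupport U) : m ≤ walkGenerator b (mollify μ η U) z := by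
  refine le_of_forall_pos_le_add fun e he ↦ ?_
  obtain ⟨t, ht, hsubmean, htelescope⟩ := (eventually_mem_nhdsWithin.and
    ((hsub.eventually_add_le_walkAverage_pow hU hs η.rOut_pos (half_pos he)).and
      (eventually_walkAverage_pow_le_add_walkGenerator b (contDiff_mollify μ η hU)
        (hasCompactSupport_mollify μ η hs) (half_pos he)))).exists
  obtain ⟨h, ⟨n, hn⟩, hsubmean, htelescope⟩ :=
    ((frequently_exists_natCast_mul_sq_eq ht).and_eventually (hsubmean.and htelescope)).exists
  have hlower := mollify_add_const_le μ η hU (continuous_walkAverage_pow b h hU n) (hsubmean n hn)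
  have hupper := htelescope n hn.le z
  rw [← walkAverage_pow_mollify μ η b h hU] at hlower
  rw [hn] at hupper
  have hgain : t * (m - e / 2) ≤ t * (walkGenerator b (mollify μ η U) z + e / 2) := by linarith
  linarith [le_of_mul_le_mul_left hgain ht]

end Mollification

section PosSemidef

variable {n : Type*} [Fintype n]

theorem posSemidef_apply_self_le_trace {B : Matrix n n ℝ} (hB : B.PosSemidef) (i : n) :
    B i i ≤ B.trace :=
  Finset.single_le_sum (f := fun i ↦ B i i) (fun _ _ ↦ hB.diag_nonneg) (Finset.mem_univ i)

theorem posSemidef_abs_apply_le_trace {B : Matrix n n ℝ} (hB : B.PosSemidef) (i j : n) :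
    |B i j| ≤ B.trace := by
  classical
  have hsymm : B j i = B i j := by simpa using hB.isHermitian.apply i j
  have hadd := hB.dotProduct_mulVec_nonneg (Pi.single i 1 + Pi.single j 1)
  have hsub := hB.dotProduct_mulVec_nonneg (Pi.single i 1 - Pi.single j 1)
  simp only [star_trivial, mulVec_add, mulVec_sub, mulVec_single_one, add_dotProduct,
    sub_dotProduct, single_one_dotProduct, Pi.add_apply, Pi.sub_apply, col_apply, hsymm]
    at hadd hsub
  have hi := posSemidef_apply_self_le_trace hB i
  have hj := posSemidef_apply_self_le_trace hB j
  exact abs_le.2 ⟨by linarith, by linarith⟩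

theorem posSemidef_det_le_trace_pow [DecidableEq n] {B : Matrix n n ℝ} (hB : B.PosSemidef) :
    B.det ≤ B.trace ^ Fintype.card n := by
  have htrace : B.trace = ∑ i, hB.isHermitian.eigenvalues i :=
    hB.isHermitian.trace_eq_sum_eigenvalues
  calc B.det = ∏ i, hB.isHermitian.eigenvalues i := hB.isHermitian.det_eq_prod_eigenvalues
    _ ≤ ∏ _i : n, B.trace := by
        refine Finset.prod_le_prod (fun i _ ↦ hB.eigenvalues_nonneg i) fun i hi ↦ ?_
        rw [htrace]
        exact Finset.single_le_sum (fun k _ ↦ hB.eigenvalues_nonneg k) hi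
    _ = B.trace ^ Fintype.card n := Finset.prod_const _

theorem posSemidef_exists_trace_mul_eq_sum {B : Matrix n n ℝ} (hB : B.PosSemidef) :
    ∃ (m : ℕ) (v : Fin m → n → ℝ), ∀ A : Matrix n n ℝ,
      (B * A).trace = ∑ k, v k ⬝ᵥ A *ᵥ v k := by
  obtain ⟨m, v, rfl⟩ := posSemidef_iff_eq_sum_vecMulVec.1 hB
  refine ⟨m, v, fun A ↦ ?_⟩
  simp only [star_trivial, Finset.sum_mul, trace_sum, vecMulVec_mul, trace_vecMulVec,
    dotProduct_mulVec, dotProduct_comm]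

end PosSemidef

section Hessian

variable {d : ℕ}

theorem fderiv_fderiv_apply_eq_dotProduct_hessianM (φ : (Fin d → ℝ) → ℝ) (x v w : Fin d → ℝ) :
    fderiv ℝ (fderiv ℝ φ) x v w = v ⬝ᵥ hessianM d φ x *ᵥ w := by
  have hmatrix : LinearMap.toMatrix₂' ℝ (fderiv ℝ (fderiv ℝ φ) x).toLinearMap₁₂ =
      hessianM d φ x := by
    ext i j
    simp [hessianM, LinearMap.toMatrix₂'_apply, iteratedFDeriv_two_apply]
  rw [← hmatrix, ← toLinearMap₂'_apply', toLinearMap₂'_toMatrix']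
  rfl

theorem exists_walkGenerator_eq_trace_mul_hessianM {B : Matrix (Fin d) (Fin d) ℝ}
    (hB : B.PosSemidef) (hB0 : B.trace ≠ 0) :
    ∃ (m : ℕ) (_ : NeZero m) (b : Fin m → Fin d → ℝ), ∀ (φ : (Fin d → ℝ) → ℝ) (x : Fin d → ℝ),
      walkGenerator b φ x = (B * hessianM d φ x).trace := by
  obtain ⟨m, v, hv⟩ := posSemidef_exists_trace_mul_eq_sum hB
  have hm : NeZero m := ⟨by
    rintro rfl
    exact hB0 (by simpa using hv 1)⟩
  refine ⟨m, hm, fun k ↦ √(2 * m) • v k, fun φ x ↦ ?_⟩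
  simp only [walkGenerator, fderiv_fderiv_apply_eq_dotProduct_hessianM, mulVec_smul,
    smul_dotProduct, dotProduct_smul, smul_eq_mul, ← Finset.mul_sum, hv, Fintype.card_fin]
  rw [← mul_assoc √(2 * m : ℝ), Real.mul_self_sqrt (by positivity), inv_mul_cancel_left₀]
  exact mul_ne_zero two_ne_zero (NeZero.ne _)

theorem hessianM_add {φ ψ : (Fin d → ℝ) → ℝ} (hφ : ContDiff ℝ 2 φ) (hψ : ContDiff ℝ 2 ψ)
    (x : Fin d → ℝ) : hessianM d (φ + ψ) x = hessianM d φ x + hessianM d ψ x := by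
  ext i j
  simp only [hessianM, iteratedFDeriv_add_apply hφ.contDiffAt hψ.contDiffAt, _root_.add_apply,
    Matrix.add_apply]

theorem contDiff_dotProduct_self {n : WithTop ℕ∞} : ContDiff ℝ n fun y : Fin d → ℝ ↦ y ⬝ᵥ y := by
  unfold dotProduct
  fun_prop

theorem hessianM_mul_dotProduct_self (α : ℝ) (x : Fin d → ℝ) :
    hessianM d (fun y ↦ α * (y ⬝ᵥ y)) x = (2 * α) • 1 := by
  let L : (Fin d → ℝ) →L[ℝ] (Fin d → ℝ) →L[ℝ] ℝ :=
    (2 * α) • ∑ k, (ContinuousLinearMap.proj k).smulRight (ContinuousLinearMap.proj k)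
  have hfderiv : fderiv ℝ (fun y : Fin d → ℝ ↦ α * (y ⬝ᵥ y)) = L := by
    ext1 y
    refine (((HasFDerivAt.fun_sum fun k _ ↦ (hasFDerivAt_apply k y).mul
      (hasFDerivAt_apply k y)).const_mul α).congr_fderiv ?_).fderiv
    ext w
    simp [L, Finset.mul_sum, ← two_mul, mul_assoc, mul_left_comm]
  ext i j
  simp only [hessianM, iteratedFDeriv_two_apply, hfderiv, ContinuousLinearMap.fderiv]
  simp [L, Matrix.one_apply, Pi.single_apply]

end Hessian

section Bellman

variable {d : ℕ}

theorem det_rpow_nonneg_of_mem_S1set {B : Matrix (Fin d) (Fin d) ℝ} (hB : B ∈ S1set d) :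
    0 ≤ B.det ^ ((1 : ℝ) / d) :=
  Real.rpow_nonneg hB.1.det_nonneg _

theorem det_rpow_le_one_of_mem_S1set {B : Matrix (Fin d) (Fin d) ℝ} (hB : B ∈ S1set d) :
    B.det ^ ((1 : ℝ) / d) ≤ 1 := by
  have hdet : B.det ≤ 1 := by simpa [hB.2] using posSemidef_det_le_trace_pow hB.1
  exact Real.rpow_le_one hB.1.det_nonneg hdet (by positivity)

theorem S1set_nonempty [NeZero d] : (S1set d).Nonempty :=
  ⟨(d : ℝ)⁻¹ • 1, PosSemidef.one.smul (by positivity), by simp⟩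

theorem bval_le_of_mem_S1set (A : Matrix (Fin d) (Fin d) ℝ) (c : ℝ)
    {B : Matrix (Fin d) (Fin d) ℝ} (hB : B ∈ S1set d) :
    bval d A B c ≤ ∑ i, ∑ j, |A j i| + |c| := by
  have htrace : -(B * A).trace ≤ ∑ i, ∑ j, |A j i| := by
    refine (neg_le_abs _).trans ((Finset.abs_sum_le_sum_abs _ _).trans ?_)
    refine Finset.sum_le_sum fun i _ ↦ ?_
    rw [diag_apply, mul_apply]
    refine (Finset.abs_sum_le_sum_abs _ _).trans (Finset.sum_le_sum fun j _ ↦ ?_)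
    rw [abs_mul]
    exact mul_le_of_le_one_left (abs_nonneg _)
      ((posSemidef_abs_apply_le_trace hB.1 i j).trans_eq hB.2)
  have hdet : c * B.det ^ ((1 : ℝ) / d) ≤ |c| * 1 :=
    mul_le_mul (le_abs_self c) (det_rpow_le_one_of_mem_S1set hB)
      (det_rpow_nonneg_of_mem_S1set hB) (abs_nonneg c)
  rw [bval]
  linarith

theorem bellman_le_iff [NeZero d] {A : Matrix (Fin d) (Fin d) ℝ} {c a : ℝ} :
    bellman d A c ≤ a ↔ ∀ B ∈ S1set d, bval d A B c ≤ a := by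
  rw [bellman, csSup_le_iff ?_ (S1set_nonempty.image _), forall_mem_image]
  exact ⟨_, forall_mem_image.2 fun B hB ↦ bval_le_of_mem_S1set A c hB⟩

theorem bellman_add_smul_one_le [NeZero d] (A : Matrix (Fin d) (Fin d) ℝ) (a c : ℝ) {β : ℝ}
    (hβ : 0 ≤ β) : bellman d (A + a • 1) (c + β) ≤ bellman d A c - a + β := by
  refine bellman_le_iff.2 fun B hB ↦ ?_
  have hA : bval d A B c ≤ bellman d A c := bellman_le_iff.1 le_rfl B hB
  have hdet : β * B.det ^ ((1 : ℝ) / d) ≤ β :=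
    mul_le_of_le_one_right hβ (det_rpow_le_one_of_mem_S1set hB)
  simp only [bval, mul_add, add_mul, trace_add, Matrix.mul_smul, mul_one, trace_smul, hB.2,
    smul_eq_mul] at hA ⊢
  linarith

end Bellman

theorem exists_continuous_hasCompactSupport_eqOn {X : Type*} [TopologicalSpace X] [T4Space X]
    [LocallyCompactSpace X] {K : Set X} (hK : IsCompact K) {u : X → ℝ} (hu : ContinuousOn u K) :
    ∃ U : X → ℝ, Continuous U ∧ HasCompactSupport U ∧ EqOn U u K := by
  obtain ⟨G, hG⟩ := ContinuousMap.exists_restrict_eq hK.isClosed ⟨K.domRestrict u, hu.domRestrict⟩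
  obtain ⟨χ, hχone, -, hχs, -⟩ :=
    exists_continuous_one_zero_of_isCompact hK isClosed_empty (disjoint_empty K)
  refine ⟨fun x ↦ χ x * G x, by fun_prop, hχs.mul_right, fun x hx ↦ ?_⟩
  have hGu : G x = u x := DFunLike.congr_fun hG ⟨x, hx⟩
  simp [hχone hx, hGu]

section Viscosity

variable {d : ℕ} {Ω : Set (Fin d → ℝ)} {f u v : (Fin d → ℝ) → ℝ}

/-- `u` is a viscosity subsolution of the Bellman equation `H(D²u, f) = 0` in `Ω`. -/
def IsViscositySubsolution (Ω : Set (Fin d → ℝ)) (f u : (Fin d → ℝ) → ℝ) : Prop :=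
  ∀ φ : (Fin d → ℝ) → ℝ, ContDiffOn ℝ 2 φ Ω →
    ∀ x ∈ Ω, IsLocalMaxOn (fun y ↦ u y - φ y) Ω x → bellman d (hessianM d φ x) (f x) ≤ 0

/-- `u` is a viscosity supersolution of the Bellman equation `H(D²u, f) = 0` in `Ω`. -/
def IsViscositySupersolution (Ω : Set (Fin d → ℝ)) (f u : (Fin d → ℝ) → ℝ) : Prop :=
  ∀ φ : (Fin d → ℝ) → ℝ, ContDiffOn ℝ 2 φ Ω →
    ∀ x ∈ Ω, IsLocalMinOn (fun y ↦ u y - φ y) Ω x → 0 ≤ bellman d (hessianM d φ x) (f x)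

theorem IsViscositySubsolution.congr (hu : IsViscositySubsolution Ω f u) (huv : EqOn u v Ω) :
    IsViscositySubsolution Ω f v := by
  intro φ hφ x hx hmax
  refine hu φ hφ x hx (hmax.congr ?_ hx)
  filter_upwards [self_mem_nhdsWithin] with y hy
  rw [huv hy]

theorem IsViscositySubsolution.isWalkSubsolutionOn [NeZero d] {ι : Type*} [Fintype ι]
    (hu : IsViscositySubsolution Ω f u) {V : Set (Fin d → ℝ)} (hV : V ⊆ Ω) {c : ℝ}
    (hc : ∀ x ∈ V, c ≤ f x) {B : Matrix (Fin d) (Fin d) ℝ} (hB : B ∈ S1set d)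
    {b : ι → Fin d → ℝ} (hb : ∀ φ x, walkGenerator b φ x = (B * hessianM d φ x).trace) :
    IsWalkSubsolutionOn b (c * B.det ^ ((1 : ℝ) / d)) u V := by
  intro χ hχ x hx hmax
  have hbval := bellman_le_iff.1 (hu χ hχ.contDiffOn x (hV hx) (hmax.on Ω)) B hB
  rw [bval, ← hb] at hbval
  have hcf := mul_le_mul_of_nonneg_right (hc x hx) (det_rpow_nonneg_of_mem_S1set hB)
  linarith

theorem IsViscositySubsolution.bellman_hessianM_mollify_nonpos [NeZero d]
    (hu : IsViscositySubsolution Ω f u) (huc : Continuous u) (hus : HasCompactSupport u)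
    (η : ContDiffBump (0 : Fin d → ℝ)) {z : Fin d → ℝ} {c : ℝ}
    (hball : ∀ x ∈ Metric.ball z (2 * η.rOut), x ∈ Ω ∧ c ≤ f x) :
    bellman d (hessianM d (mollify MeasureTheory.volume η u) z) c ≤ 0 := by
  refine bellman_le_iff.2 fun B hB ↦ ?_
  obtain ⟨m, _, b, hb⟩ :=
    exists_walkGenerator_eq_trace_mul_hessianM hB.1 (by simp [hB.2])
  have hwalk := hu.isWalkSubsolutionOn (fun x hx ↦ (hball x hx).1) (fun x hx ↦ (hball x hx).2) hB hb
  have hmollify := hwalk.le_walkGenerator_mollify MeasureTheory.volume η huc hus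
  rw [hb] at hmollify
  rw [bval]
  linarith

theorem exists_forall_ball_mem_and_le_of_isCompact {X : Type*} [PseudoMetricSpace X] {K Ω : Set X}
    {f : X → ℝ} (hK : IsCompact K) (hΩ : IsOpen Ω) (hKΩ : K ⊆ Ω) (hf : ContinuousOn f Ω) {α : ℝ}
    (hα : 0 < α) : ∃ r > 0, ∀ z ∈ K, ∀ x ∈ Metric.ball z r, x ∈ Ω ∧ f z - α ≤ f x := by
  obtain ⟨δ, hδ, hδΩ⟩ := hK.exists_thickening_subset_open hΩ hKΩ
  obtain ⟨ρ, hρ, hfρ⟩ := Metric.mem_uniformity_dist.1 (hK.uniformContinuousAt_of_continuousAt f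
    (fun z hz ↦ hf.continuousAt (hΩ.mem_nhds (hKΩ hz))) (Metric.dist_mem_uniformity hα))
  refine ⟨min δ ρ, lt_min hδ hρ, fun z hz x hx ↦ ⟨hδΩ ?_, ?_⟩⟩
  · exact Metric.mem_thickening_iff.2 ⟨z, hz, (Metric.mem_ball.1 hx).trans_le (min_le_left _ _)⟩
  · have hdist : dist (f z) (f x) < α :=
      hfρ ((Metric.mem_ball'.1 hx).trans_le (min_le_right _ _)) hz
    linarith [(abs_lt.1 hdist).2]

theorem exists_pos_mul_dotProduct_self_le {K : Set (Fin d → ℝ)} (hK : IsCompact K) {e : ℝ}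
    (he : 0 < e) : ∃ α > 0, ∀ x ∈ K, α * (x ⬝ᵥ x) ≤ e := by
  obtain ⟨M, hM⟩ := hK.bddAbove_image (contDiff_dotProduct_self (n := 0)).continuous.continuousOn
  refine ⟨e / (|M| + 1), by positivity, fun x hx ↦ ?_⟩
  have hxM : x ⬝ᵥ x ≤ M := hM (mem_image_of_mem _ hx)
  calc e / (|M| + 1) * (x ⬝ᵥ x) ≤ e / (|M| + 1) * (|M| + 1) := by
        gcongr
        linarith [le_abs_self M]
    _ = e := by field

theorem IsViscositySubsolution.exists_strict_approx [NeZero d] (hu : IsViscositySubsolution Ω f u)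
    (hΩo : IsOpen Ω) (hΩb : Bornology.IsBounded Ω) (hf : ContinuousOn f Ω)
    (huc : ContinuousOn u (closure Ω)) {K : Set (Fin d → ℝ)} (hK : IsCompact K) (hKΩ : K ⊆ Ω)
    {e : ℝ} (he : 0 < e) :
    ∃ φ : (Fin d → ℝ) → ℝ, ContDiff ℝ 2 φ ∧ (∀ x ∈ closure Ω, |φ x - u x| ≤ e) ∧
      ∀ x ∈ K, bellman d (hessianM d φ x) (f x) < 0 := by
  obtain ⟨U, hUc, hUs, hUu⟩ :=
    exists_continuous_hasCompactSupport_eqOn hΩb.isCompact_closure huc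
  have hU : IsViscositySubsolution Ω f U := hu.congr (hUu.mono subset_closure).symm
  obtain ⟨α, hα, hαe⟩ := exists_pos_mul_dotProduct_self_le hΩb.isCompact_closure (half_pos he)
  obtain ⟨r, hr, hball⟩ := exists_forall_ball_mem_and_le_of_isCompact hK hΩo hKΩ hf hα
  obtain ⟨ρ, hρ, hclose⟩ := exists_forall_abs_mollify_sub_le MeasureTheory.volume
    (hUs.uniformContinuous_of_continuous hUc) (half_pos he)
  have hmin : 0 < min (r / 2) ρ := by positivity
  let η : ContDiffBump (0 : Fin d → ℝ) :=
    ⟨min (r / 2) ρ / 2, min (r / 2) ρ, by linarith, by linarith⟩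
  have hηr : 2 * η.rOut ≤ r := by linarith [min_le_left (r / 2) ρ]
  set ψ := mollify MeasureTheory.volume η U
  have hψ : ContDiff ℝ 2 ψ := contDiff_mollify _ η hUc
  have hq : ContDiff ℝ 2 fun y : Fin d → ℝ ↦ α * (y ⬝ᵥ y) :=
    contDiff_const.mul contDiff_dotProduct_self
  refine ⟨ψ + fun y ↦ α * (y ⬝ᵥ y), hψ.add hq, fun x hx ↦ ?_, fun z hz ↦ ?_⟩
  · have hψu : |ψ x - u x| ≤ e / 2 := by simpa only [hUu hx] using hclose η (min_le_right _ _) x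
    have hq0 : 0 ≤ α * (x ⬝ᵥ x) :=
      mul_nonneg hα.le (Finset.sum_nonneg fun i _ ↦ mul_self_nonneg (x i))
    rw [abs_le] at hψu ⊢
    constructor <;> simp only [Pi.add_apply] <;> linarith [hαe x hx]
  · have hψz : bellman d (hessianM d ψ z) (f z - α) ≤ 0 :=
      hU.bellman_hessianM_mollify_nonpos hUc hUs η fun x hx ↦
        hball z hz x (Metric.ball_subset_ball hηr hx)
    have hstrict := bellman_add_smul_one_le (hessianM d ψ z) (2 * α) (f z - α) hα.le
    rw [sub_add_cancel, ← hessianM_mul_dotProduct_self α z, ← hessianM_add hψ hq] at hstrict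
    linarith

end Viscosity

theorem stmt_13_general {d : ℕ} [NeZero d] {Ω : Set (Fin d → ℝ)} (hΩo : IsOpen Ω)
    (hΩb : Bornology.IsBounded Ω) {f u₁ u₂ : (Fin d → ℝ) → ℝ} (hf : ContinuousOn f Ω)
    (hc₁ : ContinuousOn u₁ (closure Ω)) (hsub₁ : IsViscositySubsolution Ω f u₁)
    (hc₂ : ContinuousOn u₂ (closure Ω)) (hsup₂ : IsViscositySupersolution Ω f u₂)
    (hbd : ∀ x ∈ frontier Ω, u₁ x ≤ u₂ x) : ∀ x ∈ closure Ω, u₁ x ≤ u₂ x := by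
  by_contra! ⟨z, hz, hlt⟩
  set θ := (u₁ z - u₂ z) / 3
  have hθ : 0 < θ := by positivity [sub_pos.2 hlt]
  have hcomp : IsCompact (closure Ω) := hΩb.isCompact_closure
  let K := closure Ω ∩ {x | θ ≤ u₁ x - u₂ x}
  have hKcomp : IsCompact K := hcomp.of_isClosed_subset
    ((hc₁.sub hc₂).preimage_isClosed_of_isClosed isClosed_closure isClosed_Ici) inter_subset_left
  have hKΩ : K ⊆ Ω := by
    rintro x ⟨hx, hxθ : θ ≤ u₁ x - u₂ x⟩
    by_contra hxΩ
    linarith [hbd x (hΩo.frontier_eq ▸ ⟨hx, hxΩ⟩)]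
  obtain ⟨φ, hφ, hφu, hstrict⟩ := hsub₁.exists_strict_approx hΩo hΩb hf hc₁ hKcomp hKΩ hθ
  obtain ⟨x, hx, hmin⟩ := hcomp.exists_isMinOn ⟨z, hz⟩ (hc₂.sub hφ.continuous.continuousOn)
  have hxK : x ∈ K := by
    have hxz : u₂ x - φ x ≤ u₂ z - φ z := hmin hz
    refine ⟨hx, ?_⟩
    rw [mem_ofPred_eq]
    linarith [(abs_le.1 (hφu x hx)).2, (abs_le.1 (hφu z hz)).1, show 3 * θ = u₁ z - u₂ z by ring]
  exact (hstrict x hxK).not_ge <|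
    hsup₂ φ hφ.contDiffOn x (hKΩ hxK) (hmin.on_subset subset_closure).localize

/-- Uniqueness: there is at most one continuous viscosity solution of the Bellman
equation with given pointwise Dirichlet boundary data g. -/
theorem stmt_13 (d : ℕ) (hd : 2 ≤ d) (Ω : Set (Fin d → ℝ)) (hΩo : IsOpen Ω)
    (hΩb : Bornology.IsBounded Ω)
    (f : (Fin d → ℝ) → ℝ) (hfc : ContinuousOn f (closure Ω))
    (hf0 : ∀ x ∈ closure Ω, 0 ≤ f x)
    (g : (Fin d → ℝ) → ℝ)
    (u₁ u₂ : (Fin d → ℝ) → ℝ)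
    (hc₁ : ContinuousOn u₁ (closure Ω))
    (hsub₁ : ∀ φ : (Fin d → ℝ) → ℝ, ContDiffOn ℝ 2 φ Ω →
      ∀ x ∈ Ω, IsLocalMaxOn (fun y => u₁ y - φ y) Ω x →
        bellman d (hessianM d φ x) (f x) ≤ 0)
    (hsup₁ : ∀ φ : (Fin d → ℝ) → ℝ, ContDiffOn ℝ 2 φ Ω →
      ∀ x ∈ Ω, IsLocalMinOn (fun y => u₁ y - φ y) Ω x →
        0 ≤ bellman d (hessianM d φ x) (f x))
    (hbd₁ : ∀ x ∈ frontier Ω, u₁ x = g x)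
    (hc₂ : ContinuousOn u₂ (closure Ω))
    (hsub₂ : ∀ φ : (Fin d → ℝ) → ℝ, ContDiffOn ℝ 2 φ Ω →
      ∀ x ∈ Ω, IsLocalMaxOn (fun y => u₂ y - φ y) Ω x →
        bellman d (hessianM d φ x) (f x) ≤ 0)
    (hsup₂ : ∀ φ : (Fin d → ℝ) → ℝ, ContDiffOn ℝ 2 φ Ω →
      ∀ x ∈ Ω, IsLocalMinOn (fun y => u₂ y - φ y) Ω x →
        0 ≤ bellman d (hessianM d φ x) (f x))
    (hbd₂ : ∀ x ∈ frontier Ω, u₂ x = g x) :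
    ∀ x ∈ closure Ω, u₁ x = u₂ x := by
  have : NeZero d := ⟨by lia⟩
  have hf := hfc.mono subset_closure
  exact fun x hx ↦ le_antisymm
    (stmt_13_general hΩo hΩb hf hc₁ hsub₁ hc₂ hsup₂ (fun y hy ↦ by rw [hbd₁ y hy, hbd₂ y hy]) x hx)
    (stmt_13_general hΩo hΩb hf hc₂ hsub₂ hc₁ hsup₁ (fun y hy ↦ by rw [hbd₁ y hy, hbd₂ y hy]) x hx)
end
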